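/- LL is not complete with respect to LLTN: taking X = ⊥⊗⊥, the sequent ⊥ ⊕ (X⊥ ⅋ ?(X⊥)), !X has a bounded proof in LLTN, but it is not provable in LL. -/

import Mathlib

/-- Formulae of propositional-variable-free linear logic. -/
inductive Fm : Type
  | zero | one | top | bot
  | tens (A B : Fm) | parr (A B : Fm)
  | plus (A B : Fm) | awith (A B : Fm)
  | quest (A : Fm) | bang (A : Fm)

/-- Linear negation (De Morgan duality). -/
def Fm.dual : Fm → Fm
  | .zero => .top
  | .top => .zero
  | .one => .bot
  | .bot => .one
  | .tens A B => .parr A.dual B.dual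
  | .parr A B => .tens A.dual B.dual
  | .plus A B => .awith A.dual B.dual
  | .awith A B => .plus A.dual B.dual
  | .quest A => .bang A.dual
  | .bang A => .quest A.dual

/-- A formula of the form ?C. -/
def IsQuest (A : Fm) : Prop := ∃ C, A = Fm.quest C

/-- ⅋⁰A = ⊥, ⅋ⁿ⁺¹A = (⅋ⁿA) ⅋ A. -/
def parrPow : ℕ → Fm → Fm
  | 0, _ => .bot
  | n + 1, A => .parr (parrPow n A) A

/-- ⊗⁰A = 1, ⊗ⁿ⁺¹A = (⊗ⁿA) ⊗ A. -/
def tensPow : ℕ → Fm → Fm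
  | 0, _ => .one
  | n + 1, A => .tens (tensPow n A) A

/-- One-sided sequent calculus LL.  `Γ, A` is encoded as `Γ ++ [A]`. -/
inductive LL : List Fm → Prop
  | one : LL [Fm.one]
  | bot {Γ} : LL Γ → LL (Γ ++ [Fm.bot])
  | top (Γ) : LL (Γ ++ [Fm.top])
  | tens {Γ Δ A B} : LL (Γ ++ [A]) → LL (Δ ++ [B]) → LL (Γ ++ Δ ++ [Fm.tens A B])
  | parr {Γ A B} : LL (Γ ++ [A, B]) → LL (Γ ++ [Fm.parr A B])
  | plusl {Γ A B} : LL (Γ ++ [A]) → LL (Γ ++ [Fm.plus A B])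
  | plusr {Γ A B} : LL (Γ ++ [B]) → LL (Γ ++ [Fm.plus A B])
  | awith {Γ A B} : LL (Γ ++ [A]) → LL (Γ ++ [B]) → LL (Γ ++ [Fm.awith A B])
  | der {Γ A} : LL (Γ ++ [A]) → LL (Γ ++ [Fm.quest A])
  | wk {Γ A} : LL Γ → LL (Γ ++ [Fm.quest A])
  | ctr {Γ A} : LL (Γ ++ [Fm.quest A, Fm.quest A]) → LL (Γ ++ [Fm.quest A])
  | prom {Γ A} : (∀ C ∈ Γ, IsQuest C) → LL (Γ ++ [A]) → LL (Γ ++ [Fm.bang A])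
  | ex {Γ Δ A B} : LL (Γ ++ [B, A] ++ Δ) → LL (Γ ++ [A, B] ++ Δ)
  | cut {Γ Δ A} : LL (Γ ++ [A]) → LL (Fm.dual A :: Δ) → LL (Γ ++ Δ)

/-- LLT: LL with the tensor rule replaced by NewTens. -/
inductive LLT : List Fm → Prop
  | one : LLT [Fm.one]
  | bot {Γ} : LLT Γ → LLT (Γ ++ [Fm.bot])
  | top (Γ) : LLT (Γ ++ [Fm.top])
  | newtens {Γ Δ Θ A B} : (∀ C ∈ Θ, IsQuest C) →
      LLT (Γ ++ Θ ++ [A]) → LLT (Δ ++ Θ ++ [B]) →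
      LLT (Γ ++ Δ ++ Θ ++ [Fm.tens A B])
  | parr {Γ A B} : LLT (Γ ++ [A, B]) → LLT (Γ ++ [Fm.parr A B])
  | plusl {Γ A B} : LLT (Γ ++ [A]) → LLT (Γ ++ [Fm.plus A B])
  | plusr {Γ A B} : LLT (Γ ++ [B]) → LLT (Γ ++ [Fm.plus A B])
  | awith {Γ A B} : LLT (Γ ++ [A]) → LLT (Γ ++ [B]) → LLT (Γ ++ [Fm.awith A B])
  | der {Γ A} : LLT (Γ ++ [A]) → LLT (Γ ++ [Fm.quest A])
  | wk {Γ A} : LLT Γ → LLT (Γ ++ [Fm.quest A])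
  | ctr {Γ A} : LLT (Γ ++ [Fm.quest A, Fm.quest A]) → LLT (Γ ++ [Fm.quest A])
  | prom {Γ A} : (∀ C ∈ Γ, IsQuest C) → LLT (Γ ++ [A]) → LLT (Γ ++ [Fm.bang A])
  | ex {Γ Δ A B} : LLT (Γ ++ [B, A] ++ Δ) → LLT (Γ ++ [A, B] ++ Δ)
  | cut {Γ Δ A} : LLT (Γ ++ [A]) → LLT (Fm.dual A :: Δ) → LLT (Γ ++ Δ)

/-- cc-free provability in LLT: LLT without cut and without contraction. -/
inductive LLTcc : List Fm → Prop
  | one : LLTcc [Fm.one]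
  | bot {Γ} : LLTcc Γ → LLTcc (Γ ++ [Fm.bot])
  | top (Γ) : LLTcc (Γ ++ [Fm.top])
  | newtens {Γ Δ Θ A B} : (∀ C ∈ Θ, IsQuest C) →
      LLTcc (Γ ++ Θ ++ [A]) → LLTcc (Δ ++ Θ ++ [B]) →
      LLTcc (Γ ++ Δ ++ Θ ++ [Fm.tens A B])
  | parr {Γ A B} : LLTcc (Γ ++ [A, B]) → LLTcc (Γ ++ [Fm.parr A B])
  | plusl {Γ A B} : LLTcc (Γ ++ [A]) → LLTcc (Γ ++ [Fm.plus A B])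
  | plusr {Γ A B} : LLTcc (Γ ++ [B]) → LLTcc (Γ ++ [Fm.plus A B])
  | awith {Γ A B} : LLTcc (Γ ++ [A]) → LLTcc (Γ ++ [B]) → LLTcc (Γ ++ [Fm.awith A B])
  | der {Γ A} : LLTcc (Γ ++ [A]) → LLTcc (Γ ++ [Fm.quest A])
  | wk {Γ A} : LLTcc Γ → LLTcc (Γ ++ [Fm.quest A])
  | prom {Γ A} : (∀ C ∈ Γ, IsQuest C) → LLTcc (Γ ++ [A]) → LLTcc (Γ ++ [Fm.bang A])
  | ex {Γ Δ A B} : LLTcc (Γ ++ [B, A] ++ Δ) → LLTcc (Γ ++ [A, B] ++ Δ)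

/-- LLTN: LLT with contraction, weakening, dereliction and promotion replaced by
n-ary dereliction and the infinitary (!) rule. -/
inductive LLTN : List Fm → Prop
  | one : LLTN [Fm.one]
  | bot {Γ} : LLTN Γ → LLTN (Γ ++ [Fm.bot])
  | top (Γ) : LLTN (Γ ++ [Fm.top])
  | newtens {Γ Δ Θ A B} : (∀ C ∈ Θ, IsQuest C) →
      LLTN (Γ ++ Θ ++ [A]) → LLTN (Δ ++ Θ ++ [B]) →
      LLTN (Γ ++ Δ ++ Θ ++ [Fm.tens A B])
  | parr {Γ A B} : LLTN (Γ ++ [A, B]) → LLTN (Γ ++ [Fm.parr A B])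
  | plusl {Γ A B} : LLTN (Γ ++ [A]) → LLTN (Γ ++ [Fm.plus A B])
  | plusr {Γ A B} : LLTN (Γ ++ [B]) → LLTN (Γ ++ [Fm.plus A B])
  | awith {Γ A B} : LLTN (Γ ++ [A]) → LLTN (Γ ++ [B]) → LLTN (Γ ++ [Fm.awith A B])
  | nder {Γ A} (n : ℕ) : LLTN (Γ ++ [parrPow n A]) → LLTN (Γ ++ [Fm.quest A])
  | bang {Γ A} : (∀ n : ℕ, LLTN (Γ ++ [tensPow n A])) → LLTN (Γ ++ [Fm.bang A])
  | ex {Γ Δ A B} : LLTN (Γ ++ [B, A] ++ Δ) → LLTN (Γ ++ [A, B] ++ Δ)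
  | cut {Γ Δ A} : LLTN (Γ ++ [A]) → LLTN (Fm.dual A :: Δ) → LLTN (Γ ++ Δ)

/-- Cut-free provability in LLTN. -/
inductive LLTNcf : List Fm → Prop
  | one : LLTNcf [Fm.one]
  | bot {Γ} : LLTNcf Γ → LLTNcf (Γ ++ [Fm.bot])
  | top (Γ) : LLTNcf (Γ ++ [Fm.top])
  | newtens {Γ Δ Θ A B} : (∀ C ∈ Θ, IsQuest C) →
      LLTNcf (Γ ++ Θ ++ [A]) → LLTNcf (Δ ++ Θ ++ [B]) →
      LLTNcf (Γ ++ Δ ++ Θ ++ [Fm.tens A B])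
  | parr {Γ A B} : LLTNcf (Γ ++ [A, B]) → LLTNcf (Γ ++ [Fm.parr A B])
  | plusl {Γ A B} : LLTNcf (Γ ++ [A]) → LLTNcf (Γ ++ [Fm.plus A B])
  | plusr {Γ A B} : LLTNcf (Γ ++ [B]) → LLTNcf (Γ ++ [Fm.plus A B])
  | awith {Γ A B} : LLTNcf (Γ ++ [A]) → LLTNcf (Γ ++ [B]) → LLTNcf (Γ ++ [Fm.awith A B])
  | nder {Γ A} (n : ℕ) : LLTNcf (Γ ++ [parrPow n A]) → LLTNcf (Γ ++ [Fm.quest A])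
  | bang {Γ A} : (∀ n : ℕ, LLTNcf (Γ ++ [tensPow n A])) → LLTNcf (Γ ++ [Fm.bang A])
  | ex {Γ Δ A B} : LLTNcf (Γ ++ [B, A] ++ Δ) → LLTNcf (Γ ++ [A, B] ++ Δ)

/-- Γ has a bounded proof in LLTN: either a cut-free proof, or a single final cut
whose premises (a proof of a single formula A and a proof of A⊥, Γ) are cut-free. -/
def BoundedLLTN (Γ : List Fm) : Prop :=
  LLTNcf Γ ∨ ∃ A : Fm, LLTNcf [A] ∧ LLTNcf (Fm.dual A :: Γ)

/-- The duplicator formula dup(A) = !( ?(A⊥) ⅋ (!A ⊗ !A) ). -/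
def dup (A : Fm) : Fm :=
  Fm.bang (Fm.parr (Fm.quest A.dual) (Fm.tens (Fm.bang A) (Fm.bang A)))

/-!
In LLTN one proves `!X` by proving every `⊗ⁿX`, and one may pick a different proof for each `n`:
for `n = 0` choose `⊥` in the `⊕`, and for `n + 1` choose `X⊥ ⅋ ?(X⊥)`, opening `?(X⊥)` by the
dereliction of arity `n`.

In LL the sequent would give `1 & (X ⊗ !X) ⊢ !X`. In phase semantics `!X` is the biorthogonal of
the exponential elements of `X`, so it may be smaller than the intersection of the powers of `X`.
For a countermodel, take an element `u` outside the pole whose product with every element except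
the unit lies in the pole: then `u` is orthogonal to every set without the unit, which puts it in
`1` and in `X ⊗ !X`, but it is not in `!X` as soon as the unit is orthogonal to `!X`. A monoid with
six elements suffices.
-/

open Set
open scoped Pointwise

namespace LLTNcf

variable {Γ Δ : List Fm} {A A' B B' : Fm}

theorem append_perm (h : Γ.Perm Δ) : ∀ Θ, LLTNcf (Θ ++ Γ) → LLTNcf (Θ ++ Δ) := by
  induction h with
  | nil => exact fun _ => id
  | cons A _ ih => exact fun Θ hΘ => by simpa using ih (Θ ++ [A]) (by simpa using hΘ)
  | swap A B Γ => exact fun Θ hΘ => by simpa using ex (Γ := Θ) (Δ := Γ) (by simpa using hΘ)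
  | trans _ _ ih₁ ih₂ => exact fun Θ => ih₂ Θ ∘ ih₁ Θ

theorem perm (h : Γ.Perm Δ) : LLTNcf Γ → LLTNcf Δ :=
  append_perm h []

theorem swap : LLTNcf [A, B] → LLTNcf [B, A] :=
  perm (.swap _ _ _)

theorem tens_of_pairs (hA : LLTNcf [A', A]) (hB : LLTNcf [B', B]) :
    LLTNcf [Fm.tens A B, A', B'] :=
  perm (List.perm_append_comm (l₁ := [A', B']))
    (newtens (Γ := [A']) (Δ := [B']) (Θ := []) (by simp) hA hB)

theorem parr_tens (hA : LLTNcf [A', A]) (hB : LLTNcf [B', B]) :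
    LLTNcf [Fm.parr A' B', Fm.tens A B] :=
  swap (parr (Γ := [_]) (tens_of_pairs hA hB))

theorem parrPow_tensPow (h : LLTNcf [A', A]) : ∀ n, LLTNcf [parrPow n A', tensPow n A]
  | 0 => swap (bot one)
  | n + 1 => parr_tens (parrPow_tensPow h n) h

theorem quest_bang (h : LLTNcf [A', A]) : LLTNcf [Fm.quest A', Fm.bang A] :=
  bang (Γ := [_]) fun n => swap (nder (Γ := [_]) n (swap (parrPow_tensPow h n)))

theorem plus_awith (hA : LLTNcf [A', A]) (hB : LLTNcf [B', B]) :
    LLTNcf [Fm.plus A' B', Fm.awith A B] :=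
  awith (Γ := [_]) (swap (plusl (Γ := [_]) (swap hA))) (swap (plusr (Γ := [_]) (swap hB)))

theorem identity (A : Fm) : LLTNcf [A.dual, A] := by
  induction A with
  | zero => exact swap (top [Fm.zero])
  | one => exact swap (bot one)
  | top => exact top [Fm.zero]
  | bot => exact bot one
  | tens _ _ ihA ihB => exact parr_tens ihA ihB
  | parr _ _ ihA ihB => exact swap (parr_tens (swap ihA) (swap ihB))
  | plus _ _ ihA ihB => exact swap (plus_awith (swap ihA) (swap ihB))
  | awith _ _ ihA ihB => exact plus_awith ihA ihB
  | quest _ ih => exact swap (quest_bang (swap ih))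
  | bang _ ih => exact quest_bang ih

theorem plus_bot_parr_quest_bang (A : Fm) :
    LLTNcf [Fm.plus Fm.bot (Fm.parr A.dual (Fm.quest A.dual)), Fm.bang A] := by
  refine bang (Γ := [_]) fun n => swap ?_
  cases n with
  | zero => exact plusl (Γ := [_]) (bot one)
  | succ n =>
    have premise : LLTNcf [tensPow (n + 1) A, parrPow n A.dual, A.dual] :=
      tens_of_pairs (parrPow_tensPow (identity A) n) (identity A)
    refine plusr (Γ := [_]) (parr (Γ := [_]) (nder (Γ := [_, _]) n ?_))
    exact perm (.cons _ (.swap _ _ _)) premise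

end LLTNcf

/-- The orthogonal of `S` with respect to the pole `P`. -/
def orth {M : Type*} [Mul M] (P S : Set M) : Set M :=
  {x | ∀ y ∈ S, x * y ∈ P}

section Orthogonality

variable {M : Type*} {P S T : Set M}

theorem subset_orth_iff [Mul M] : S ⊆ orth P T ↔ S * T ⊆ P :=
  mul_subset_iff.symm

theorem orth_anti [Mul M] (h : S ⊆ T) : orth P T ⊆ orth P S :=
  fun _ hx y hy => hx y (h hy)

theorem orth_singleton_one [MulOneClass M] : orth P {1} = P := by
  simp [orth]

variable [CommSemigroup M]

theorem subset_orth_comm : S ⊆ orth P T ↔ T ⊆ orth P S := by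
  rw [subset_orth_iff, subset_orth_iff, mul_comm]

theorem subset_biorth : S ⊆ orth P (orth P S) :=
  subset_orth_comm.1 Subset.rfl

theorem triorth : orth P (orth P (orth P S)) = orth P S :=
  (orth_anti subset_biorth).antisymm subset_biorth

theorem biorth_mul_subset_pole (h : S * T ⊆ P) : orth P (orth P S) * T ⊆ P :=
  subset_orth_iff.1 (orth_anti (subset_orth_comm.1 (subset_orth_iff.2 h)))

theorem biorth_mul_biorth_subset :
    orth P (orth P S) * orth P (orth P T) ⊆ orth P (orth P (S * T)) := by
  have hST : S * (T * orth P (S * T)) ⊆ P := by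
    rw [← mul_assoc, ← subset_orth_iff]
    exact subset_biorth
  have hS := biorth_mul_subset_pole hST
  rw [mul_left_comm] at hS
  have hT := biorth_mul_subset_pole hS
  rwa [subset_orth_iff, mul_assoc, mul_left_comm]

theorem biorth_pole {M : Type*} [CommMonoid M] {P : Set M} : orth P (orth P P) = P := by
  simpa only [orth_singleton_one] using triorth (P := P) (S := {1})

end Orthogonality

/-- A phase space: a commutative monoid with a pole, which interprets `⊥`, and a submonoid of
exponential elements, which interprets the modalities. Weakening is `exps_subset_one` and
contraction is `isIdempotentElem`. -/
structure PhaseSpace (M : Type*) [CommMonoid M] where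
  pole : Set M
  exps : Submonoid M
  exps_subset_one : (exps : Set M) ⊆ orth pole pole
  isIdempotentElem : ∀ a ∈ exps, IsIdempotentElem a

namespace PhaseSpace

variable {M : Type*} [CommMonoid M] (F : PhaseSpace M)

/-- The interpretation of a formula as a fact, that is, as a set equal to its biorthogonal. -/
def interp : Fm → Set M
  | .zero => orth F.pole univ
  | .one => orth F.pole F.pole
  | .top => univ
  | .bot => F.pole
  | .tens A B => orth F.pole (orth F.pole (interp A * interp B))
  | .parr A B => orth F.pole (orth F.pole (interp A) * orth F.pole (interp B))
  | .plus A B => orth F.pole (orth F.pole (interp A) ∩ orth F.pole (interp B))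
  | .awith A B => interp A ∩ interp B
  | .quest A => orth F.pole (orth F.pole (interp A) ∩ F.exps)
  | .bang A => orth F.pole (orth F.pole (interp A ∩ F.exps))

theorem biorth_interp (A : Fm) : orth F.pole (orth F.pole (F.interp A)) = F.interp A := by
  induction A with
  | top => exact (subset_univ _).antisymm subset_biorth
  | bot => exact biorth_pole
  | awith A B ihA ihB =>
    refine Subset.antisymm (subset_inter ?_ ?_) subset_biorth
    · exact (orth_anti (orth_anti inter_subset_left)).trans ihA.subset
    · exact (orth_anti (orth_anti inter_subset_right)).trans ihB.subset
  | _ => exact triorth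

theorem interp_dual (A : Fm) : F.interp A.dual = orth F.pole (F.interp A) := by
  induction A with
  | zero => exact (F.biorth_interp .top).symm
  | one => exact biorth_pole.symm
  | top | bot => rfl
  | tens A B ihA ihB => simp only [Fm.dual, interp, ihA, ihB, biorth_interp, triorth]
  | plus A B ihA ihB =>
    have h := F.biorth_interp (.awith A.dual B.dual)
    simp only [interp, ihA, ihB] at h
    simp only [Fm.dual, interp, ihA, ihB, h]
  | bang A ih => simp only [Fm.dual, interp, ih, biorth_interp, triorth]
  | parr A B ihA ihB | awith A B ihA ihB =>
    simp only [Fm.dual, interp, ihA, ihB, biorth_interp]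
  | quest A ih => simp only [Fm.dual, interp, ih]

/-- The interpretation of the one-sided sequent `Γ` moved to the left of the turnstile: the product
of the orthogonals of its formulae. -/
def refutation (Γ : List Fm) : Set M :=
  (Γ.map fun A => orth F.pole (F.interp A)).prod

variable {F} {Γ Δ : List Fm} {A : Fm}

@[simp]
theorem refutation_nil : F.refutation [] = 1 :=
  rfl

@[simp]
theorem refutation_cons :
    F.refutation (A :: Γ) = orth F.pole (F.interp A) * F.refutation Γ := by
  simp [refutation]

@[simp]
theorem refutation_append : F.refutation (Γ ++ Δ) = F.refutation Γ * F.refutation Δ := by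
  simp [refutation]

theorem refutation_append_singleton_subset_pole :
    F.refutation (Γ ++ [A]) ⊆ F.pole ↔ F.refutation Γ ⊆ F.interp A := by
  rw [← F.biorth_interp A, subset_orth_iff]
  simp

theorem refutation_subset_biorth_inter_exps (hΓ : ∀ C ∈ Γ, IsQuest C) :
    F.refutation Γ ⊆ orth F.pole (orth F.pole (F.refutation Γ ∩ F.exps)) := by
  induction Γ with
  | nil => exact subset_biorth.trans' (by simp [F.exps.one_mem])
  | cons A Γ ih =>
    obtain ⟨⟨C, rfl⟩, hΓ'⟩ := List.forall_mem_cons.1 hΓ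
    rw [refutation_cons]
    let Q := orth F.pole (F.interp C) ∩ F.exps
    have hexps : Q * (F.refutation Γ ∩ F.exps) ⊆ F.exps :=
      mul_subset_iff.2 fun _ ha _ hb => F.exps.mul_mem ha.2 hb.2
    calc orth F.pole (F.interp (.quest C)) * F.refutation Γ
        ⊆ orth F.pole (orth F.pole Q)
            * orth F.pole (orth F.pole (F.refutation Γ ∩ F.exps)) :=
          mul_subset_mul_left (ih hΓ')
      _ ⊆ orth F.pole (orth F.pole (Q * (F.refutation Γ ∩ F.exps))) :=
          biorth_mul_biorth_subset
      _ ⊆ orth F.pole (orth F.pole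
            (orth F.pole (F.interp (.quest C)) * F.refutation Γ ∩ F.exps)) :=
          orth_anti (orth_anti (subset_inter
            (mul_subset_mul subset_biorth inter_subset_left) hexps))

theorem subset_interp_quest_of_contraction {S : Set M}
    (h : S * (F.interp (Fm.quest A).dual * F.interp (Fm.quest A).dual) ⊆ F.pole) :
    S ⊆ F.interp (.quest A) := by
  rw [interp_dual] at h
  refine subset_orth_iff.2 (Subset.trans (mul_subset_mul_left fun a ha => ?_) h)
  rw [← (F.isIdempotentElem a ha.2).eq]
  exact mul_mem_mul (subset_biorth ha) (subset_biorth ha)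

theorem refutation_subset_pole_of_ll (h : LL Γ) : F.refutation Γ ⊆ F.pole := by
  induction h with
  | one => simp [interp, biorth_pole]
  | bot _ ih => exact refutation_append_singleton_subset_pole.2 ih
  | top Γ => exact refutation_append_singleton_subset_pole.2 (subset_univ _)
  | tens _ _ ihA ihB =>
    rw [refutation_append_singleton_subset_pole] at *
    rw [refutation_append]
    exact (mul_subset_mul ihA ihB).trans subset_biorth
  | parr _ ih =>
    rw [refutation_append_singleton_subset_pole]
    exact subset_orth_iff.2 (by simpa using ih)
  | plusl _ ih | der _ ih =>
    rw [refutation_append_singleton_subset_pole] at *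
    exact ih.trans (subset_orth_comm.1 inter_subset_left)
  | plusr _ ih =>
    rw [refutation_append_singleton_subset_pole] at *
    exact ih.trans (subset_orth_comm.1 inter_subset_right)
  | awith _ _ ihA ihB =>
    rw [refutation_append_singleton_subset_pole] at *
    exact subset_inter ihA ihB
  | wk _ ih =>
    rw [refutation_append_singleton_subset_pole]
    exact ih.trans (subset_orth_comm.1 (inter_subset_right.trans F.exps_subset_one))
  | ctr _ ih =>
    rw [refutation_append_singleton_subset_pole]
    exact subset_interp_quest_of_contraction (by simpa [interp_dual] using ih)
  | prom hΓ _ ih =>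
    rw [refutation_append_singleton_subset_pole] at *
    exact (refutation_subset_biorth_inter_exps hΓ).trans
      (orth_anti (orth_anti (inter_subset_inter_left _ ih)))
  | ex _ ih => simpa [mul_left_comm] using ih
  | cut _ _ ihA ihΔ =>
    rw [refutation_append_singleton_subset_pole] at ihA
    rw [refutation_cons, interp_dual, biorth_interp] at ihΔ
    rw [refutation_append]
    exact (mul_subset_mul_right ihA).trans ihΔ

theorem interp_dual_subset_of_ll {B : Fm} (h : LL [A, B]) : F.interp A.dual ⊆ F.interp B := by
  have hAB := refutation_append_singleton_subset_pole.1
    (refutation_subset_pole_of_ll (F := F) (Γ := [A] ++ [B]) h)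
  simpa [interp_dual] using hAB

end PhaseSpace

/-- The six-element commutative monoid of the countermodel: `q, p, pp, zero` are the powers of `p`
truncated at `p³ = 0`, with `q` as their unit, `u` times anything but `one` is `zero`, and `one` is
the unit of the whole monoid. -/
inductive CounterMonoid : Type
  | one | u | q | p | pp | zero

namespace CounterMonoid

instance : CommMonoid CounterMonoid where
  one := one
  mul
    | one, x | x, one => x
    | q, q => q
    | q, p | p, q => p
    | q, pp | pp, q | p, p => pp
    | _, _ => zero
  mul_assoc := by rintro ⟨⟩ ⟨⟩ ⟨⟩ <;> rfl
  mul_comm := by rintro ⟨⟩ ⟨⟩ <;> rfl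
  one_mul := by rintro ⟨⟩ <;> rfl
  mul_one := by rintro ⟨⟩ <;> rfl

/-- The pole of the countermodel. -/
def pole : Set CounterMonoid :=
  {q, p, zero}

theorem one_notMem_pole : 1 ∉ pole := by
  rintro (h | h | h) <;> cases h

theorem u_notMem_pole : u ∉ pole := by
  rintro (h | h | h) <;> cases h

theorem pp_notMem_pole : pp ∉ pole := by
  rintro (h | h | h) <;> cases h

theorem q_mem_pole : q ∈ pole :=
  .inl rfl

theorem p_mem_pole : p ∈ pole :=
  .inr (.inl rfl)

theorem u_mul_mem_pole {x : CounterMonoid} (hx : x ≠ 1) : u * x ∈ pole := by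
  cases x
  case one => exact absurd rfl hx
  all_goals exact .inr (.inr rfl)

theorem u_mem_orth {S : Set CounterMonoid} (hS : 1 ∉ S) : u ∈ orth pole S :=
  fun _ hx => u_mul_mem_pole (ne_of_mem_of_not_mem hx hS)

theorem one_notMem_pole_mul_pole : 1 ∉ pole * pole := by
  rintro ⟨_, rfl | rfl | rfl, _, rfl | rfl | rfl, h⟩ <;> cases h

/-- The phase space of the countermodel, with exponential elements `1` and `q`. -/
def phaseSpace : PhaseSpace CounterMonoid where
  pole := pole
  exps :=
    { carrier := {1, q}
      one_mem' := .inl rfl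
      mul_mem' := by
        rintro _ _ (rfl | rfl) (rfl | rfl)
        exacts [.inl rfl, .inr rfl, .inr rfl, .inr rfl] }
  exps_subset_one := by
    rintro _ (rfl | rfl) x hx
    · rwa [one_mul]
    · rcases hx with rfl | rfl | rfl
      exacts [.inl rfl, .inr (.inl rfl), .inr (.inr rfl)]
  isIdempotentElem := by rintro _ (rfl | rfl) <;> rfl

/-- The formula `X = ⊥ ⊗ ⊥`. -/
abbrev X : Fm :=
  .tens .bot .bot

theorem one_notMem_interp_X : 1 ∉ phaseSpace.interp X :=
  fun h => u_notMem_pole (h u (u_mem_orth one_notMem_pole_mul_pole))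

theorem q_mem_interp_X : q ∈ phaseSpace.interp X :=
  subset_biorth ⟨q, q_mem_pole, q, q_mem_pole, rfl⟩

theorem pp_mem_interp_X : pp ∈ phaseSpace.interp X :=
  subset_biorth ⟨p, p_mem_pole, p, p_mem_pole, rfl⟩

theorem q_mem_interp_bang_X : q ∈ phaseSpace.interp (.bang X) :=
  subset_biorth ⟨q_mem_interp_X, .inr rfl⟩

theorem u_notMem_interp_bang_X : u ∉ phaseSpace.interp (.bang X) := by
  have hone : 1 ∈ orth pole (phaseSpace.interp X ∩ phaseSpace.exps) := by
    rintro x ⟨hX, rfl | rfl⟩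
    · exact absurd hX one_notMem_interp_X
    · exact q_mem_pole
  exact fun h => u_notMem_pole (h 1 hone)

theorem u_mem_interp_one : u ∈ phaseSpace.interp .one :=
  u_mem_orth one_notMem_pole

theorem u_mem_interp_tens_bang_X : u ∈ phaseSpace.interp (.tens X (.bang X)) :=
  u_mem_orth fun h => pp_notMem_pole (h pp ⟨pp, pp_mem_interp_X, q, q_mem_interp_bang_X, rfl⟩)

theorem not_interp_one_awith_subset_interp_bang :
    ¬ phaseSpace.interp (.awith .one (.tens X (.bang X))) ⊆ phaseSpace.interp (.bang X) :=
  fun h => u_notMem_interp_bang_X (h ⟨u_mem_interp_one, u_mem_interp_tens_bang_X⟩)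

end CounterMonoid

/-- LL is not complete w.r.t. LLTN: with X = ⊥⊗⊥, the sequent
⊥ ⊕ (X⊥ ⅋ ?(X⊥)), !X has a bounded proof in LLTN but is not provable in LL. -/
theorem ll_incomplete_for_lltn :
    (BoundedLLTN
      [Fm.plus Fm.bot (Fm.parr (Fm.tens Fm.bot Fm.bot).dual
          (Fm.quest (Fm.tens Fm.bot Fm.bot).dual)),
        Fm.bang (Fm.tens Fm.bot Fm.bot)]) ∧
    ¬ LL [Fm.plus Fm.bot (Fm.parr (Fm.tens Fm.bot Fm.bot).dual
          (Fm.quest (Fm.tens Fm.bot Fm.bot).dual)),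
        Fm.bang (Fm.tens Fm.bot Fm.bot)] := by
  refine ⟨.inl (LLTNcf.plus_bot_parr_quest_bang _), fun h => ?_⟩
  exact CounterMonoid.not_interp_one_awith_subset_interp_bang
    (PhaseSpace.interp_dual_subset_of_ll h)
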